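/- Let C ∈ M_N be invertible and 𝒱 : M_N → M_N be ℂ-linear, sending Hermitian matrices to Hermitian matrices and positive semidefinite matrices to positive semidefinite matrices. For each M let Ĉ_M ∈ M_N and let 𝒱̂_M : M_N → M_N be ℂ-linear maps sending Hermitian matrices to Hermitian matrices and positive semidefinite matrices to positive semidefinite matrices, and suppose Ĉ_M → C and 𝒱̂_M[Q] → 𝒱[Q] for every Q ∈ M_N as M → ∞. Define P̂_M := sup_{Q ≻ 0} inf_{v ≠ 0} (v* Ĉ_M* Q Ĉ_M v)/(v* 𝒱̂_M[Q] v) and P := sup_{Q ≻ 0} inf_{v ≠ 0} (v* C* Q C v)/(v* 𝒱[Q] v), both valued in [0,∞]. Then P̂_M → P in [0,∞] as M → ∞. -/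

import Mathlib

open Matrix ComplexOrder ENNReal

noncomputable section

abbrev Mat (N : ℕ) := Matrix (Fin N) (Fin N) ℂ

/-- Real quadratic form `v* A v` (real part). -/
def qf {N : ℕ} (A : Mat N) (v : Fin N → ℂ) : ℝ := (star v ⬝ᵥ A *ᵥ v).re

/-- The congruence map `Q ↦ Lᴴ Q L`. -/
def conjBy {N : ℕ} (L : Mat N) : Mat N →ₗ[ℂ] Mat N where
  toFun Q := Lᴴ * Q * L
  map_add' Q Q' := by simp [Matrix.mul_add, Matrix.add_mul]
  map_smul' a Q := by simp [Matrix.mul_smul, Matrix.smul_mul]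

/-- The operator `𝒮[Q] = 𝒱[(L⁻¹)ᴴ Q L⁻¹]`. -/
def Smap {N : ℕ} (L : Mat N) (V : Mat N →ₗ[ℂ] Mat N) : Module.End ℂ (Mat N) :=
  V ∘ₗ conjBy L⁻¹

/-- `P := sup_{Q ≻ 0} inf_{v ≠ 0} (v* L* Q L v)/(v* 𝒱[Q] v)`, valued in `[0,∞]`,
with the convention that a ratio with zero denominator and positive numerator is `∞`. -/
def Pval {N : ℕ} (L : Mat N) (V : Mat N →ₗ[ℂ] Mat N) : ℝ≥0∞ :=
  ⨆ Q : {Q : Mat N // Q.PosDef}, ⨅ v : {v : Fin N → ℂ // v ≠ 0},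
    ENNReal.ofReal (qf (Lᴴ * Q.1 * L) v.1) / ENNReal.ofReal (qf (V Q.1) v.1)

/-- Spectral radius of a linear endomorphism of matrix space: the largest modulus of an
eigenvalue. -/
def specRad {N : ℕ} (f : Module.End ℂ (Mat N)) : ℝ :=
  sSup {r : ℝ | ∃ μ : ℂ, f.HasEigenvalue μ ∧ r = ‖μ‖}
section helpers
open Filter Topology

variable {N : ℕ}

lemma qf_add (A B : Mat N) (v) : qf (A + B) v = qf A v + qf B v := by
  simp [qf, Matrix.add_mulVec, dotProduct_add]

lemma qf_sub (A B : Mat N) (v) : qf (A - B) v = qf A v - qf B v := by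
  simp [qf, Matrix.sub_mulVec, dotProduct_sub]

lemma qf_smul (t : ℝ) (A : Mat N) (v) : qf ((t : ℂ) • A) v = t * qf A v := by
  simp [qf, Matrix.smul_mulVec, dotProduct_smul]

lemma qf_smul_vec (t : ℝ) (A : Mat N) (v) : qf A ((t : ℂ) • v) = t ^ 2 * qf A v := by
  simp [qf, Matrix.mulVec_smul, dotProduct_smul, smul_dotProduct]
  ring

lemma qf_pos {A : Mat N} (hA : A.PosDef) {v} (hv : v ≠ 0) : 0 < qf A v :=
  hA.re_dotProduct_pos hv

lemma qf_nonneg {A : Mat N} (hA : A.PosSemidef) (v) : 0 ≤ qf A v :=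
  hA.re_dotProduct_nonneg v

lemma herm_im {A : Mat N} (hA : A.IsHermitian) (v : Fin N → ℂ) :
    (star v ⬝ᵥ A *ᵥ v).im = 0 := hA.im_star_dotProduct_mulVec_self v

lemma psd_of_qf {A : Mat N} (hA : A.IsHermitian) (h : ∀ v, v ≠ 0 → 0 ≤ qf A v) :
    A.PosSemidef := by
  refine .of_dotProduct_mulVec_nonneg hA fun v => ?_
  rw [Complex.le_def]
  refine ⟨?_, (herm_im hA v).symm⟩
  by_cases hv : v = 0
  · simp [hv]
  · exact h v hv

lemma pd_of_qf {A : Mat N} (hA : A.IsHermitian) (h : ∀ v, v ≠ 0 → 0 < qf A v) :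
    A.PosDef := by
  refine .of_dotProduct_mulVec_pos hA fun v hv => ?_
  rw [Complex.lt_def]
  exact ⟨h v hv, (herm_im hA v).symm⟩

lemma continuous_qf : Continuous fun p : Mat N × (Fin N → ℂ) => qf p.1 p.2 := by
  unfold qf
  fun_prop

lemma eventually_qf_pos {A : Mat N} (h : ∀ v, v ≠ 0 → 0 < qf A v) :
    ∀ᶠ B in 𝓝 A, ∀ v, v ≠ 0 → 0 < qf B v := by
  have hK : IsCompact (Metric.sphere (0 : Fin N → ℂ) 1) := isCompact_sphere _ _
  have := hK.eventually_forall_of_forall_eventually (x₀ := A)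
    (P := fun B v => 0 < qf B v) (fun v hv => by
      refine continuous_qf.continuousAt.eventually_const_lt ?_
      refine h v ?_
      rintro rfl
      simp at hv)
  filter_upwards [this] with B hB v hv
  have hn : 0 < ‖v‖ := norm_pos_iff.2 hv
  have h1 := hB (((‖v‖⁻¹ : ℝ) : ℂ) • v) (by simp [norm_smul, hn.ne'])
  rw [qf_smul_vec] at h1
  exact pos_of_mul_pos_right h1 (by positivity)

lemma exists_bound {Q X : Mat N} (hQ : Q.PosDef) (hX : X.IsHermitian) :
    ∃ c : ℝ, 0 ≤ c ∧ ((c : ℂ) • Q + X).PosSemidef ∧ ((c : ℂ) • Q - X).PosSemidef := by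
  have h := eventually_qf_pos (A := Q) (fun v hv => qf_pos hQ hv)
  have h1 : Tendsto (fun e : ℝ => Q + (e : ℂ) • X) (𝓝[>] 0) (𝓝 Q) := by
    have : Continuous (fun e : ℝ => Q + (e : ℂ) • X) := by fun_prop
    have := this.tendsto 0
    simp only [Complex.ofReal_zero, zero_smul, add_zero] at this
    exact this.mono_left nhdsWithin_le_nhds
  have h2 : Tendsto (fun e : ℝ => Q - (e : ℂ) • X) (𝓝[>] 0) (𝓝 Q) := by
    have : Continuous (fun e : ℝ => Q - (e : ℂ) • X) := by fun_prop
    have := this.tendsto 0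
    simp only [Complex.ofReal_zero, zero_smul, sub_zero] at this
    exact this.mono_left nhdsWithin_le_nhds
  obtain ⟨e, ⟨he1, he2⟩, he⟩ :=
    ((h1.eventually h).and (h2.eventually h) |>.and self_mem_nhdsWithin).exists
  have he : 0 < e := he
  have hc (t : ℝ) {A : Mat N} (hA : A.IsHermitian) : ((t : ℂ) • A).IsHermitian := by
    rw [Matrix.IsHermitian, conjTranspose_smul, hA.eq]; simp
  refine ⟨e⁻¹, by positivity, psd_of_qf ((hc _ hQ.1).add hX) fun v hv => ?_,
    psd_of_qf ((hc _ hQ.1).sub hX) fun v hv => ?_⟩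
  · have := he1 v hv
    rw [qf_add, qf_smul] at this ⊢
    have h3 : e⁻¹ * qf Q v + qf X v = e⁻¹ * (qf Q v + e * qf X v) := by field_simp
    rw [h3]; positivity
  · have := he2 v hv
    rw [qf_sub, qf_smul] at this ⊢
    have h3 : e⁻¹ * qf Q v - qf X v = e⁻¹ * (qf Q v - e * qf X v) := by field_simp
    rw [h3]; positivity

lemma psd_smul {A : Mat N} (hA : A.PosSemidef) {t : ℝ} (ht : 0 ≤ t) :
    ((t : ℂ) • A).PosSemidef := hA.smul (by simpa using ht)

lemma iter_bound {S : Module.End ℂ (Mat N)}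
    (hS : ∀ Q : Mat N, Q.PosSemidef → (S Q).PosSemidef) {Q : Mat N} {r c : ℝ}
    (hr : 0 ≤ r) (hc : 0 ≤ c)
    (h : ((r : ℂ) • Q - S Q).PosSemidef) {X : Mat N} (hX : ((c : ℂ) • Q + X).PosSemidef) (k : ℕ) :
    (((c * r ^ k : ℝ) : ℂ) • Q + (S ^ k) X).PosSemidef := by
  induction k with
  | zero => simpa using hX
  | succ k ih =>
    have h1 := (hS _ ih).add (psd_smul h (t := c * r ^ k) (by positivity))
    convert h1 using 1
    rw [map_add, map_smul, pow_succ' S]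
    simp only [Module.End.mul_apply, smul_sub, smul_smul]
    push_cast
    rw [show (c : ℂ) * r ^ (k + 1) = c * r ^ k * r by ring]
    abel

lemma norm_bound {A B : Mat N} (h1 : (A + B).PosSemidef) (h2 : (A - B).PosSemidef)
    (v : Fin N → ℂ) : ‖star v ⬝ᵥ B *ᵥ v‖ ≤ qf A v := by
  have a1 := h1.dotProduct_mulVec_nonneg v
  have a2 := h2.dotProduct_mulVec_nonneg v
  rw [Matrix.add_mulVec, dotProduct_add, Complex.le_def] at a1
  rw [Matrix.sub_mulVec, dotProduct_sub, Complex.le_def] at a2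
  simp only [Complex.zero_re, Complex.zero_im, Complex.add_re, Complex.add_im, Complex.sub_re,
    Complex.sub_im] at a1 a2
  have him : (star v ⬝ᵥ B *ᵥ v).im = 0 := by linarith [a1.2, a2.2]
  have : star v ⬝ᵥ B *ᵥ v = ((star v ⬝ᵥ B *ᵥ v).re : ℂ) := by
    apply Complex.ext <;> simp [him]
  rw [this, Complex.norm_real, Real.norm_eq_abs, abs_le]
  unfold qf
  constructor <;> linarith [a1.1, a2.1]

lemma exists_ne_zero {X : Mat N} (hX : X ≠ 0) : ∃ v : Fin N → ℂ, star v ⬝ᵥ X *ᵥ v ≠ 0 := by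
  by_contra! h
  apply hX
  have : Matrix.toEuclideanLin X = 0 := by
    rw [← inner_map_self_eq_zero]
    intro v
    have := h (WithLp.ofLp v)
    rw [inner_eq_zero_symm]
    rw [EuclideanSpace.inner_eq_star_dotProduct]
    simp [Matrix.toEuclideanLin, dotProduct_comm] at this ⊢
    exact this
  simpa using this

lemma eig_le {S : Module.End ℂ (Mat N)}
    (hS : ∀ Q : Mat N, Q.PosSemidef → (S Q).PosSemidef) {Q : Mat N} {r : ℝ}
    (hr : 0 < r) (hQ : Q.PosDef)
    (h : ((r : ℂ) • Q - S Q).PosSemidef) {μ : ℂ} (hμ : S.HasEigenvalue μ) : ‖μ‖ ≤ r := by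
  obtain ⟨X, hX⟩ := hμ.exists_hasEigenvector
  obtain ⟨v, hv⟩ := exists_ne_zero hX.2
  set A : Mat N := (realPart X : Mat N)
  set B : Mat N := (imaginaryPart X : Mat N)
  have hA : A.IsHermitian := (realPart X).2
  have hB : B.IsHermitian := (imaginaryPart X).2
  have hXAB : X = A + Complex.I • B := (realPart_add_I_smul_imaginaryPart X).symm
  have key : ∀ Y : Mat N, Y.IsHermitian → ∃ b : ℝ, 0 ≤ b ∧ ∀ k : ℕ,
      ‖star v ⬝ᵥ ((S ^ k) Y) *ᵥ v‖ ≤ b * r ^ k := by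
    intro Y hY
    obtain ⟨c, hc, h1, h2⟩ := exists_bound hQ hY
    refine ⟨c * qf Q v, mul_nonneg hc (qf_nonneg hQ.posSemidef v), fun k => ?_⟩
    have := norm_bound (iter_bound hS hr.le hc h h1 k)
      (by simpa [sub_eq_add_neg] using
        iter_bound hS hr.le hc h (X := -Y) (by simpa [sub_eq_add_neg] using h2) k) v
    rw [qf_smul] at this
    linarith
  obtain ⟨a, ha, ha'⟩ := key A hA
  obtain ⟨b, hb, hb'⟩ := key B hB
  have hall : ∀ k : ℕ, ‖μ‖ ^ k * ‖star v ⬝ᵥ X *ᵥ v‖ ≤ (a + b) * r ^ k := by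
    intro k
    have e1 : (S ^ k) X = μ ^ k • X := hX.pow_apply k
    have e2 : (μ ^ k) * (star v ⬝ᵥ X *ᵥ v) =
        star v ⬝ᵥ ((S ^ k) A) *ᵥ v + Complex.I * (star v ⬝ᵥ ((S ^ k) B) *ᵥ v) := by
      have : star v ⬝ᵥ ((S ^ k) X) *ᵥ v = (μ ^ k) * (star v ⬝ᵥ X *ᵥ v) := by
        rw [e1, Matrix.smul_mulVec, dotProduct_smul, smul_eq_mul]
      rw [← this, hXAB, map_add, map_smul, Matrix.add_mulVec, dotProduct_add, Matrix.smul_mulVec,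
        dotProduct_smul, smul_eq_mul]
    rw [← norm_pow, ← norm_mul, e2]
    refine (norm_add_le _ _).trans ?_
    rw [norm_mul, Complex.norm_I, one_mul]
    linarith [ha' k, hb' k]
  by_contra! hlt
  have hpos : 0 < ‖star v ⬝ᵥ X *ᵥ v‖ := norm_pos_iff.2 hv
  have ht := tendsto_pow_atTop_atTop_of_one_lt ((one_lt_div hr).2 hlt)
  obtain ⟨k, hk⟩ := (ht.eventually_gt_atTop ((a + b) / ‖star v ⬝ᵥ X *ᵥ v‖)).exists
  rw [div_pow, div_lt_div_iff₀ hpos (by positivity)] at hk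
  linarith [hall k]

/-- the standard basis of the matrix space -/
def bas (N : ℕ) : Module.Basis (Fin N × Fin N) ℂ (Mat N) := Matrix.stdBasis ℂ (Fin N) (Fin N)

section gelfand
attribute [local instance] Matrix.linftyOpNormedRing Matrix.linftyOpNormedAlgebra

lemma matrix_pow_tendsto {ι : Type*} [Fintype ι] [DecidableEq ι] [Nonempty ι] (T : Matrix ι ι ℂ)
    {r : ℝ} (hr : 0 < r)
    (h : ∀ μ ∈ spectrum ℂ T, ‖μ‖ < r) :
    Tendsto (fun n : ℕ => (((r ^ n)⁻¹ : ℝ) : ℂ) • T ^ n) atTop (𝓝 0) := by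
  haveI : CompleteSpace (Matrix ι ι ℂ) := FiniteDimensional.complete ℂ _
  lift r to NNReal using hr.le
  have h1 : spectralRadius ℂ T < (r : ℝ≥0∞) :=
    spectrum.spectralRadius_lt_of_forall_lt T (fun μ hμ => h μ hμ)
  obtain ⟨s, hs1, hs2⟩ := ENNReal.lt_iff_exists_nnreal_btwn.1 h1
  have hs2 : (s : ℝ) < r := by exact_mod_cast hs2
  have h2 := spectrum.pow_nnnorm_pow_one_div_tendsto_nhds_spectralRadius T
  have h3 := h2.eventually_lt_const hs1
  refine tendsto_zero_iff_norm_tendsto_zero.2 ?_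
  refine squeeze_zero' (.of_forall fun _ => norm_nonneg _) ?_
    (_root_.tendsto_pow_atTop_nhds_zero_of_lt_one (r := (s : ℝ) / r) (by positivity) ((div_lt_one hr).2 hs2))
  filter_upwards [h3, eventually_gt_atTop 0] with n hn hn0
  have h4 : (‖T ^ n‖₊ : ℝ≥0∞) < (s : ℝ≥0∞) ^ (n : ℝ) := by
    have hn' : (0 : ℝ) < n := by exact_mod_cast hn0
    have := ENNReal.rpow_lt_rpow hn hn'
    rwa [← ENNReal.rpow_mul, one_div, inv_mul_cancel₀ hn'.ne', ENNReal.rpow_one] at this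
  rw [ENNReal.rpow_natCast] at h4
  have h5 : ‖T ^ n‖ < (s : ℝ) ^ n := by exact_mod_cast h4
  rw [norm_smul, Complex.norm_real, div_pow, Real.norm_of_nonneg (by positivity), div_eq_inv_mul]
  gcongr
end gelfand

lemma end_pow_tendsto [NeZero N] (S : Module.End ℂ (Mat N)) {r : ℝ} (hr : 0 < r)
    (h : ∀ μ, S.HasEigenvalue μ → ‖μ‖ < r) (X : Mat N) :
    Tendsto (fun n : ℕ => (((r ^ n)⁻¹ : ℝ) : ℂ) • (S ^ n) X) atTop (𝓝 0) := by
  have h1 := matrix_pow_tendsto (LinearMap.toMatrix (bas N) (bas N) S) hr (fun μ hμ => by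
    rw [LinearMap.spectrum_toMatrix] at hμ
    exact h μ (Module.End.hasEigenvalue_iff_mem_spectrum.2 hμ))
  have h2 : ∀ n : ℕ, (((r ^ n)⁻¹ : ℝ) : ℂ) • (S ^ n) X =
      ∑ i, (((((r ^ n)⁻¹ : ℝ) : ℂ) • (LinearMap.toMatrix (bas N) (bas N) S) ^ n) *ᵥ
        ((bas N).repr X)) i • bas N i := by
    intro n
    rw [LinearMap.toMatrix_pow, Matrix.smul_mulVec, LinearMap.toMatrix_mulVec_repr]
    simp only [Pi.smul_apply, smul_assoc]
    rw [← Finset.smul_sum, Module.Basis.sum_repr]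
  simp_rw [h2]
  have hc : Continuous (fun T : Matrix (Fin N × Fin N) (Fin N × Fin N) ℂ =>
      ∑ i, (T *ᵥ ((bas N).repr X)) i • bas N i) := by fun_prop
  have := (hc.tendsto 0).comp h1
  simp only [Matrix.zero_mulVec, Pi.zero_apply, zero_smul, Finset.sum_const_zero] at this
  exact this

lemma exists_super [NeZero N] {S : Module.End ℂ (Mat N)}
    (hS : ∀ Q : Mat N, Q.PosSemidef → (S Q).PosSemidef) {r : ℝ}
    (hr : 0 < r) (h : ∀ μ, S.HasEigenvalue μ → ‖μ‖ < r) :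
    ∃ Q : Mat N, Q.PosDef ∧ ((r : ℂ) • Q - S Q).PosSemidef := by
  have hpow : ∀ k : ℕ, ((S ^ k) 1).PosSemidef := by
    intro k
    induction k with
    | zero => simpa using Matrix.PosSemidef.one
    | succ k ih => rw [pow_succ' S]; exact hS _ ih
  have hpow' : ∀ k : ℕ, ((((r ^ k)⁻¹ : ℝ) : ℂ) • (S ^ k) 1).PosSemidef := fun k =>
    psd_smul (hpow k) (by positivity)
  have h1 := end_pow_tendsto S hr h 1
  have h2 : Tendsto (fun n : ℕ => (1 : Mat N) - (((r ^ n)⁻¹ : ℝ) : ℂ) • (S ^ n) 1) atTop (𝓝 1) := by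
    simpa using h1.const_sub 1
  have h3 := h2.eventually (eventually_qf_pos (A := (1 : Mat N))
    fun v hv => qf_pos Matrix.PosDef.one hv)
  obtain ⟨n, hn, hn0⟩ := (h3.and (eventually_gt_atTop 0)).exists
  have hpsd : ((1 : Mat N) - (((r ^ n)⁻¹ : ℝ) : ℂ) • (S ^ n) 1).PosSemidef :=
    psd_of_qf (Matrix.isHermitian_one.sub (hpow' n).1) fun v hv => (hn v hv).le
  refine ⟨∑ k ∈ Finset.range n, (((r ^ k)⁻¹ : ℝ) : ℂ) • (S ^ k) 1, ?_, ?_⟩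
  · obtain ⟨m, rfl⟩ := Nat.exists_eq_succ_of_ne_zero hn0.ne'
    rw [Finset.sum_range_succ']
    refine Matrix.PosDef.posSemidef_add (Matrix.posSemidef_sum _ fun k _ => hpow' _) ?_
    simpa using Matrix.PosDef.one
  · have e : ∀ m : ℕ, (r : ℂ) • (∑ k ∈ Finset.range m, (((r ^ k)⁻¹ : ℝ) : ℂ) • (S ^ k) 1) -
        S (∑ k ∈ Finset.range m, (((r ^ k)⁻¹ : ℝ) : ℂ) • (S ^ k) 1) =
        (r : ℂ) • ((1 : Mat N) - (((r ^ m)⁻¹ : ℝ) : ℂ) • (S ^ m) 1) := by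
      intro m
      induction m with
      | zero => simp
      | succ m ih =>
        rw [Finset.sum_range_succ, map_add, smul_add, add_sub_add_comm, ih, map_smul,
          pow_succ' S, Module.End.mul_apply, smul_sub, smul_sub, smul_smul _ _ (S _)]
        have : (r : ℂ) * (((r ^ (m + 1))⁻¹ : ℝ) : ℂ) = (((r ^ m)⁻¹ : ℝ) : ℂ) := by
          push_cast
          have : (r : ℂ) ≠ 0 := by exact_mod_cast hr.ne'
          field_simp
          ring
        rw [this]
        abel
    rw [e]
    exact psd_smul hpsd hr.le

lemma eig_near {S : Module.End ℂ (Mat N)} {SM : ℕ → Module.End ℂ (Mat N)}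
    (hconv : ∀ Q, Tendsto (fun M => SM M Q) atTop (𝓝 (S Q))) {μ : ℂ} (hμ : S.HasEigenvalue μ)
    {ε : ℝ} (hε : 0 < ε) : ∀ᶠ M in atTop, ∃ ν, (SM M).HasEigenvalue ν ∧ ‖μ - ν‖ < ε := by
  set T : Module.End ℂ (Mat N) → Matrix (Fin N × Fin N) (Fin N × Fin N) ℂ :=
    fun S => LinearMap.toMatrix (bas N) (bas N) S with hT
  have hev : ∀ S' : Module.End ℂ (Mat N), S'.charpoly.eval μ = (scalar _ μ - T S').det := by
    intro S'
    rw [← LinearMap.charpoly_toMatrix S' (bas N), Matrix.eval_charpoly]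
  have hTc : Tendsto (fun M => T (SM M)) atTop (𝓝 (T S)) := by
    refine tendsto_pi_nhds.2 fun i => tendsto_pi_nhds.2 fun j => ?_
    simp only [hT, LinearMap.toMatrix_apply]
    have hc : Continuous (fun X : Mat N => (bas N).repr X i) := by
      have : (fun X : Mat N => (bas N).repr X i) = fun X => X i.1 i.2 := by
        ext X
        simp [bas, Matrix.stdBasis]
      rw [this]
      fun_prop
    exact (hc.tendsto _).comp (hconv _)
  have hdet : Tendsto (fun M => (SM M).charpoly.eval μ) atTop (𝓝 0) := by
    have h0 : S.charpoly.eval μ = 0 := (Module.End.hasEigenvalue_iff_isRoot_charpoly S μ).1 hμ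
    rw [← h0]
    simp_rw [hev]
    have hc : Continuous (fun A : Matrix (Fin N × Fin N) (Fin N × Fin N) ℂ =>
      (scalar _ μ - A).det) := by fun_prop
    exact (hc.tendsto _).comp hTc
  have hsmall := (hdet.norm).eventually_lt_const (u := ε ^ Module.finrank ℂ (Mat N))
    (by simpa using pow_pos hε _)
  filter_upwards [hsmall] with M hM
  by_contra! hcon
  have hsp := IsAlgClosed.splits (SM M).charpoly
  have hmon := (SM M).charpoly_monic
  rw [hsp.eval_eq_prod_roots_of_monic hmon, ← LinearMap.charpoly_natDegree (SM M),
    hsp.natDegree_eq_card_roots] at hM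
  have hr : ∀ ν ∈ (SM M).charpoly.roots, ε ≤ ‖μ - ν‖ := fun ν hν =>
    hcon ν ((Module.End.hasEigenvalue_iff_isRoot_charpoly _ _).2 (Polynomial.isRoot_of_mem_roots hν))
  have gen : ∀ m : Multiset ℂ, (∀ ν ∈ m, ε ≤ ‖μ - ν‖) →
      ε ^ m.card ≤ ‖(m.map (fun ν => μ - ν)).prod‖ := by
    intro m
    induction m using Multiset.induction with
    | empty => simp
    | cons a m ih =>
      intro hm
      rw [Multiset.card_cons, Multiset.map_cons, Multiset.prod_cons, norm_mul, pow_succ']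
      exact mul_le_mul (hm a (by simp)) (ih fun ν hν => hm ν (by simp [hν])) (by positivity)
        (norm_nonneg _)
  linarith [gen _ hr]

lemma conj_pd {L Q : Mat N} (hL : IsUnit L) (hQ : Q.PosDef) : (Lᴴ * Q * L).PosDef :=
  hQ.conjTranspose_mul_mul_same (mulVec_injective_of_isUnit hL)

lemma le_Pval {L : Mat N} (hL : IsUnit L) {V : Mat N →ₗ[ℂ] Mat N} {Q : Mat N} (hQ : Q.PosDef)
    {t : ℝ} (ht : 0 ≤ t) (h : ∀ v, v ≠ 0 → t * qf (V Q) v ≤ qf (Lᴴ * Q * L) v) :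
    ENNReal.ofReal t ≤ Pval L V := by
  refine le_iSup_of_le ⟨Q, hQ⟩ (le_iInf fun v => ?_)
  have hp := qf_pos (conj_pd hL hQ) v.2
  rw [ENNReal.le_div_iff_mul_le (.inr (by simpa using hp)) (.inl ENNReal.ofReal_ne_top),
    ← ENNReal.ofReal_mul ht]
  exact ENNReal.ofReal_le_ofReal (h v.1 v.2)

lemma of_lt_Pval {L : Mat N} {V : Mat N →ₗ[ℂ] Mat N}
    {t : ℝ} (ht : 0 ≤ t) (h : ENNReal.ofReal t < Pval L V) :
    ∃ Q : Mat N, Q.PosDef ∧ ∀ v, v ≠ 0 → t * qf (V Q) v ≤ qf (Lᴴ * Q * L) v := by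
  obtain ⟨⟨Q, hQ⟩, h⟩ := lt_iSup_iff.1 h
  refine ⟨Q, hQ, fun v hv => ?_⟩
  have h1 := ENNReal.mul_le_of_le_div (h.le.trans (iInf_le _ ⟨v, hv⟩))
  rw [← ENNReal.ofReal_mul ht] at h1
  exact (ENNReal.ofReal_le_ofReal_iff
    (qf_nonneg (hQ.posSemidef.conjTranspose_mul_mul_same L) v)).1 h1

lemma Smap_conj {L : Mat N} (hL : IsUnit L) (V : Mat N →ₗ[ℂ] Mat N) (Q : Mat N) :
    Smap L V (Lᴴ * Q * L) = V Q := by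
  have hd : IsUnit L.det := (Matrix.isUnit_iff_isUnit_det L).1 hL
  simp only [Smap, conjBy, LinearMap.comp_apply, LinearMap.coe_mk, AddHom.coe_mk]
  congr 1
  have h1 : L⁻¹ᴴ * Lᴴ = 1 := by
    rw [← conjTranspose_mul, Matrix.mul_nonsing_inv _ hd, conjTranspose_one]
  calc L⁻¹ᴴ * (Lᴴ * Q * L) * L⁻¹ = (L⁻¹ᴴ * Lᴴ) * Q * (L * L⁻¹) := by noncomm_ring
    _ = Q := by rw [h1, Matrix.mul_nonsing_inv _ hd]; simp

lemma Smap_psd (L : Mat N) {V : Mat N →ₗ[ℂ] Mat N}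
    (hV : ∀ Q : Mat N, Q.PosSemidef → (V Q).PosSemidef) :
    ∀ Q : Mat N, Q.PosSemidef → (Smap L V Q).PosSemidef := fun _ hQ =>
  hV _ (hQ.conjTranspose_mul_mul_same _)

lemma conv_joint {V : Mat N →ₗ[ℂ] Mat N} {VM : ℕ → (Mat N →ₗ[ℂ] Mat N)}
    (hV : ∀ Q : Mat N, Tendsto (fun M => VM M Q) atTop (𝓝 (V Q))) {Y : Mat N} {YM : ℕ → Mat N}
    (hY : Tendsto YM atTop (𝓝 Y)) : Tendsto (fun M => VM M (YM M)) atTop (𝓝 (V Y)) := by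
  have e : ∀ (W : Mat N →ₗ[ℂ] Mat N) (X : Mat N),
      W X = ∑ i, ∑ j, X i j • W (Matrix.single i j 1) := by
    intro W X
    conv_lhs => rw [matrix_eq_sum_single X]
    simp only [map_sum]
    refine Finset.sum_congr rfl fun i _ => Finset.sum_congr rfl fun j _ => ?_
    rw [← map_smul, Matrix.smul_single, smul_eq_mul, mul_one]
  simp_rw [e _ (YM _)]
  rw [e V Y]
  refine tendsto_finsetSum _ fun i _ => tendsto_finsetSum _ fun j _ => ?_
  exact ((tendsto_pi_nhds.1 (tendsto_pi_nhds.1 hY i) j)).smul (hV _)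

lemma Smap_conv {C : Mat N} (hC : IsUnit C) {V : Mat N →ₗ[ℂ] Mat N} {CM : ℕ → Mat N}
    {VM : ℕ → (Mat N →ₗ[ℂ] Mat N)}
    (hCconv : Tendsto CM atTop (𝓝 C))
    (hVconv : ∀ Q : Mat N, Tendsto (fun M => VM M Q) atTop (𝓝 (V Q))) (Q : Mat N) :
    Tendsto (fun M => Smap (CM M) (VM M) Q) atTop (𝓝 (Smap C V Q)) := by
  have hd : IsUnit C.det := (Matrix.isUnit_iff_isUnit_det C).1 hC
  have hinv : Tendsto (fun M => (CM M)⁻¹) atTop (𝓝 C⁻¹) := by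
    refine Tendsto.comp (continuousAt_matrix_inv C ?_) hCconv
    rw [Ring.inverse_eq_inv']
    exact continuousAt_inv₀ hd.ne_zero
  refine conv_joint hVconv ?_
  have hc : Continuous (fun L : Mat N => Lᴴ * Q * L) := by fun_prop
  exact (hc.tendsto _).comp hinv

end helpers

open Filter Topology in
/-- consistency.  If `Ĉ_M → C` (with `C` invertible) and `𝒱̂_M[Q] → 𝒱[Q]`
for all `Q`, with all maps Hermitian- and PSD-preserving, then `P̂_M → P` in `[0,∞]`. -/
theorem stmt10 {N : ℕ} (hN : 0 < N) (C : Mat N) (hC : IsUnit C)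
    (V : Mat N →ₗ[ℂ] Mat N)
    (hVherm : ∀ Q : Mat N, Q.IsHermitian → (V Q).IsHermitian)
    (hVpsd : ∀ Q : Mat N, Q.PosSemidef → (V Q).PosSemidef)
    (CM : ℕ → Mat N) (VM : ℕ → (Mat N →ₗ[ℂ] Mat N))
    (hVMherm : ∀ (M : ℕ) (Q : Mat N), Q.IsHermitian → (VM M Q).IsHermitian)
    (hVMpsd : ∀ (M : ℕ) (Q : Mat N), Q.PosSemidef → (VM M Q).PosSemidef)
    (hCconv : Tendsto CM atTop (𝓝 C))
    (hVconv : ∀ Q : Mat N, Tendsto (fun M => VM M Q) atTop (𝓝 (V Q))) :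
    Tendsto (fun M => Pval (CM M) (VM M)) atTop (𝓝 (Pval C V)) := by
  haveI : NeZero N := ⟨hN.ne'⟩
  have hd : IsUnit C.det := (Matrix.isUnit_iff_isUnit_det C).1 hC
  have hCM : ∀ᶠ M in atTop, IsUnit (CM M) := by
    have hc : Continuous (fun L : Mat N => L.det) := by fun_prop
    filter_upwards [((hc.tendsto C).comp hCconv).eventually_ne hd.ne_zero] with M hM
    exact (Matrix.isUnit_iff_isUnit_det _).2 (isUnit_iff_ne_zero.2 hM)
  rw [tendsto_order]
  constructor
  · intro a ha
    obtain ⟨t', ht'0, hat', ht'P⟩ := ENNReal.lt_iff_exists_real_btwn.1 ha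
    obtain ⟨t, ht0, hat, htt'⟩ := ENNReal.lt_iff_exists_real_btwn.1 hat'
    have htt : t < t' := (ENNReal.ofReal_lt_ofReal_iff_of_nonneg ht0).1 htt'
    obtain ⟨Q, hQ, h⟩ := of_lt_Pval ht'0 ht'P
    have hpos : ∀ v, v ≠ 0 → 0 < qf (Cᴴ * Q * C - (t : ℂ) • V Q) v := by
      intro v hv
      rw [qf_sub, qf_smul]
      have h1 := qf_pos (conj_pd hC hQ) hv
      have h2 := h v hv
      have h3 := qf_nonneg (hVpsd Q hQ.posSemidef) v
      rcases h3.eq_or_lt with h3 | h3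
      · rw [← h3]; linarith
      · nlinarith
    have hlim : Tendsto (fun M => (CM M)ᴴ * Q * CM M - (t : ℂ) • VM M Q) atTop
        (𝓝 (Cᴴ * Q * C - (t : ℂ) • V Q)) := by
      have hc : Continuous (fun L : Mat N => Lᴴ * Q * L) := by fun_prop
      exact ((hc.tendsto _).comp hCconv).sub ((hVconv Q).const_smul _)
    filter_upwards [hlim.eventually (eventually_qf_pos hpos), hCM] with M hM hu
    refine hat.trans_le (le_Pval hu hQ ht0 fun v hv => ?_)
    have := hM v hv
    rw [qf_sub, qf_smul] at this
    linarith
  · intro a ha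
    obtain ⟨t', ht'0, hPt', ht'a⟩ := ENNReal.lt_iff_exists_real_btwn.1 ha
    obtain ⟨t, ht0, hPt, htt'⟩ := ENNReal.lt_iff_exists_real_btwn.1 hPt'
    have htt : t < t' := (ENNReal.ofReal_lt_ofReal_iff_of_nonneg ht0).1 htt'
    have ht : 0 < t := ENNReal.ofReal_pos.1 ((zero_le).trans_lt hPt)
    have hinv : t'⁻¹ < t⁻¹ := inv_strictAnti₀ ht htt
    have hex : ∃ μ, (Smap C V).HasEigenvalue μ ∧ t⁻¹ ≤ ‖μ‖ := by
      by_contra! hcon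
      obtain ⟨Q, hQ, hQ'⟩ := exists_super (Smap_psd C hVpsd) (inv_pos.2 ht) hcon
      refine absurd hPt (not_lt.2 ?_)
      have hCi : IsUnit C⁻¹ := (Matrix.isUnit_nonsing_inv_iff).2 hC
      refine le_Pval hC (conj_pd hCi hQ) ht0 fun v hv => ?_
      have e : Cᴴ * (C⁻¹ᴴ * Q * C⁻¹) * C = Q := by
        have h1 : Cᴴ * C⁻¹ᴴ = 1 := by
          rw [← conjTranspose_mul, Matrix.nonsing_inv_mul _ hd, conjTranspose_one]
        calc Cᴴ * (C⁻¹ᴴ * Q * C⁻¹) * C = (Cᴴ * C⁻¹ᴴ) * Q * (C⁻¹ * C) := by noncomm_ring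
          _ = Q := by rw [h1, Matrix.nonsing_inv_mul _ hd]; simp
      rw [e]
      have h2 := qf_nonneg hQ' v
      rw [qf_sub, qf_smul] at h2
      have h3 : qf (V (C⁻¹ᴴ * Q * C⁻¹)) v ≤ t⁻¹ * qf Q v := by
        have : Smap C V Q = V (C⁻¹ᴴ * Q * C⁻¹) := rfl
        rw [← this]; linarith
      calc t * qf (V (C⁻¹ᴴ * Q * C⁻¹)) v ≤ t * (t⁻¹ * qf Q v) := by gcongr
        _ = qf Q v := by field_simp
    obtain ⟨μ, hμ, hμt⟩ := hex
    filter_upwards [hCM, eig_near (Smap_conv hC hCconv hVconv) hμ (sub_pos.2 hinv)]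
      with M hu ⟨ν, hν, hνμ⟩
    refine lt_of_le_of_lt ?_ ht'a
    by_contra! hcon
    obtain ⟨Q, hQ, h⟩ := of_lt_Pval ht'0 hcon
    have ht' : 0 < t' := ht.trans htt
    have hle := eig_le (Smap_psd (CM M) (hVMpsd M)) (inv_pos.2 ht') (conj_pd hu hQ) (by
      rw [Smap_conj hu]
      refine psd_of_qf ((psd_smul (conj_pd hu hQ).posSemidef (inv_pos.2 ht').le).1.sub
        (hVMherm M Q hQ.1)) fun v hv => ?_
      rw [qf_sub, qf_smul]
      have := h v hv
      have h5 : qf (VM M Q) v ≤ t'⁻¹ * qf ((CM M)ᴴ * Q * CM M) v := by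
        rw [le_inv_mul_iff₀ ht']; exact this
      linarith) hν
    have : ‖μ‖ ≤ ‖μ - ν‖ + ‖ν‖ := by simpa using norm_add_le (μ - ν) ν
    linarith

end
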